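/- Let n ∈ ℕ, σ ∈ {0,1}^n, and let a_n = #{j : σ_j = 0}. Then the Haar coefficient of the local discrepancy of the digit shifted Hammersley point set R_{n,σ} (with N = 2^n points) for j = (−1,−1), m = (0,0) satisfies μ_{(−1,−1),(0,0)} = ∫_{[0,1]^2} D_N(R_{n,σ},t) dt = 2^{−(n+3)}(2a_n + 4 − n) + 2^{−2(n+1)}. -/

import Mathlib

open MeasureTheory

/-- The real value of a binary digit. -/
noncomputable def bval (b : Bool) : ℝ := if b then 1 else 0

/-- The two-dimensional digit shifted Hammersley point set with `2^n` points,
indexed by the digit vectors `t : Fin n → Bool`.  The index `i : Fin n`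
corresponds to the digit `t_{i+1}` of the paper. -/
noncomputable def hammersleyShifted (n : ℕ) (σ : Fin n → Bool) (t : Fin n → Bool) : ℝ × ℝ :=
  (∑ i : Fin n, bval (t i) / 2 ^ (n - i.val),
   ∑ i : Fin n, bval (t i != σ i) / 2 ^ (i.val + 1))

/-- Number of points of the (indexed) point set `P` lying in `[0,t₁) × [0,t₂)`. -/
noncomputable def countIn {ι : Type*} [Fintype ι] (P : ι → ℝ × ℝ) (t : ℝ × ℝ) : ℕ :=
  (Finset.univ.filter
    (fun k => 0 ≤ (P k).1 ∧ (P k).1 < t.1 ∧ 0 ≤ (P k).2 ∧ (P k).2 < t.2)).card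

/-- The local discrepancy `D_N(P,t) = A_N([0,t),P)/N - t₁t₂` of an indexed point set. -/
noncomputable def localDisc {ι : Type*} [Fintype ι] (P : ι → ℝ × ℝ) (t : ℝ × ℝ) : ℝ :=
  (countIn P t : ℝ) / (Fintype.card ι) - t.1 * t.2

/-- The `L_p`-discrepancy of an indexed point set. -/
noncomputable def LpDisc (p : ℝ) {ι : Type*} [Fintype ι] (P : ι → ℝ × ℝ) : ℝ :=
  (∫ t in Set.Icc (0 : ℝ × ℝ) 1, |localDisc P t| ^ p) ^ (1 / p)

/-- One-dimensional `L∞`-normalized Haar function `h_{j,m}`, with `j ∈ ℤ`, `j = -1`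
giving the indicator of `[0,1)` and `j ≥ 0` the usual Haar function on `I_{j,m}`. -/
noncomputable def haar1 (j : ℤ) (m : ℕ) (x : ℝ) : ℝ :=
  if j = -1 then (if 0 ≤ x ∧ x < 1 then 1 else 0)
  else if (2 * m : ℝ) / 2 ^ (j.toNat + 1) ≤ x ∧ x < (2 * m + 1 : ℝ) / 2 ^ (j.toNat + 1) then 1
  else if (2 * m + 1 : ℝ) / 2 ^ (j.toNat + 1) ≤ x ∧ x < (2 * m + 2 : ℝ) / 2 ^ (j.toNat + 1) then -1
  else 0

/-- Two-dimensional (tensor product) Haar function. -/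
noncomputable def haar2 (j : ℤ × ℤ) (m : ℕ × ℕ) (x : ℝ × ℝ) : ℝ :=
  haar1 j.1 m.1 x.1 * haar1 j.2 m.2 x.2

/-- One-dimensional dyadic interval `I_{j,m}` (with `I_{-1,0} = [0,1)`). -/
noncomputable def dyadicI (j : ℤ) (m : ℕ) : Set ℝ :=
  if j = -1 then Set.Ico (0 : ℝ) 1
  else Set.Ico ((m : ℝ) / 2 ^ j.toNat) ((m + 1 : ℝ) / 2 ^ j.toNat)

/-- Haar coefficient `μ_{j,m} = ∫_{[0,1]²} D_N(P,t) h_{j,m}(t) dt` of the local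
discrepancy of an indexed point set. -/
noncomputable def haarCoeff {ι : Type*} [Fintype ι] (P : ι → ℝ × ℝ) (j : ℤ × ℤ) (m : ℕ × ℕ) : ℝ :=
  ∫ t in Set.Icc (0 : ℝ × ℝ) 1, localDisc P t * haar2 j m t

/-- Number of zero components of the shift `σ`. -/
noncomputable def zeroCount {n : ℕ} (σ : Fin n → Bool) : ℕ :=
  (Finset.univ.filter (fun j => σ j = false)).card

/-- The symmetrized digit shifted Hammersley point set `R_{n,σ} ∪ R_{n,σ⊕1}`
with `2^(n+1)` points, indexed by `Bool × (Fin n → Bool)`. -/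
noncomputable def hammersleySym (n : ℕ) (σ : Fin n → Bool) :
    Bool × (Fin n → Bool) → ℝ × ℝ :=
  fun bt => if bt.1 then hammersleyShifted n (fun i => !(σ i)) bt.2
            else hammersleyShifted n σ bt.2

/-- The multiset `R_{n,σ} ∪ {(x, 1-y) : (x,y) ∈ R_{n,σ}}` with `2^(n+1)` points
(counted with multiplicity), indexed by `Bool × (Fin n → Bool)`. -/
noncomputable def hammersleySymTilde (n : ℕ) (σ : Fin n → Bool) :
    Bool × (Fin n → Bool) → ℝ × ℝ :=
  fun bt => if bt.1 then ((hammersleyShifted n σ bt.2).1, 1 - (hammersleyShifted n σ bt.2).2)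
            else hammersleyShifted n σ bt.2

lemma sum_cov (n : ℕ) : ∀ (p q : Fin n → ℝ) (A B : ℝ),
    ∑ t : Fin n → Bool, (A - ∑ i, (bval (t i) - 1/2) * p i) * (B - ∑ i, (bval (t i) - 1/2) * q i)
      = 2 ^ n * (A * B + (∑ i, p i * q i) / 4) := by
  induction n with
  | zero => intro p q A B; simp
  | succ n ih =>
    intro p q A B
    rw [← Equiv.sum_comp (Fin.consEquiv (fun _ : Fin (n+1) => Bool)), Fintype.sum_prod_type]
    simp only [Fin.consEquiv_apply, Fin.sum_univ_succ, Fin.cons_zero, Fin.cons_succ,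
      ← sub_sub, Fintype.sum_bool]
    rw [ih, ih]
    simp only [bval]
    norm_num
    ring

lemma sum_q (n : ℕ) : ∑ i : Fin n, (1:ℝ) / 2 ^ (i.val + 1) = 1 - 1 / 2 ^ n := by
  rw [Fin.sum_univ_eq_sum_range (fun i => (1:ℝ) / 2 ^ (i + 1))]
  induction n with
  | zero => simp
  | succ n ih => rw [Finset.sum_range_succ, ih]; field_simp; ring

lemma sum_p (n : ℕ) : ∑ i : Fin n, (1:ℝ) / 2 ^ (n - i.val) = 1 - 1 / 2 ^ n := by
  rw [← sum_q n, ← Equiv.sum_comp Fin.revPerm]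
  refine Finset.sum_congr rfl fun i _ => ?_
  have : n - (Fin.revPerm i).val = i.val + 1 := by
    simp [Fin.val_rev]; omega
  rw [this]

noncomputable def eps (b : Bool) : ℝ := if b then -1 else 1

lemma bval_ne (t s : Bool) : bval (t != s) = 1/2 + eps s * (bval t - 1/2) := by
  cases t <;> cases s <;> norm_num [bval, eps]

lemma sum_eps (n : ℕ) (σ : Fin n → Bool) :
    ∑ i, eps (σ i) = 2 * (zeroCount σ : ℝ) - n := by
  have h : ∀ i, eps (σ i) = 2 * (if σ i = false then 1 else 0) - 1 := by
    intro i; cases σ i <;> norm_num [eps]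
  simp only [h, Finset.sum_sub_distrib, ← Finset.mul_sum, zeroCount, Finset.sum_boole]
  simp

lemma one_sub_fst (n : ℕ) (σ t : Fin n → Bool) : 1 - (hammersleyShifted n σ t).1 =
    (1 + 1 / 2 ^ n) / 2 - ∑ i, (bval (t i) - 1/2) * (1 / 2 ^ (n - i.val)) := by
  have := sum_p n
  simp only [hammersleyShifted, sub_mul, Finset.sum_sub_distrib, ← Finset.mul_sum, this]
  simp only [mul_one_div]
  ring

lemma one_sub_snd (n : ℕ) (σ t : Fin n → Bool) : 1 - (hammersleyShifted n σ t).2 =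
    (1 + 1 / 2 ^ n) / 2 - ∑ i, (bval (t i) - 1/2) * (eps (σ i) / 2 ^ (i.val + 1)) := by
  have h := sum_q n
  have : ∀ i : Fin n, bval (t i != σ i) / 2 ^ (i.val + 1) =
      1/2 * (1 / 2 ^ (i.val + 1)) + (bval (t i) - 1/2) * (eps (σ i) / 2 ^ (i.val + 1)) := by
    intro i; rw [bval_ne]; ring
  simp only [hammersleyShifted, this, Finset.sum_add_distrib, ← Finset.mul_sum, h]
  ring

lemma bval_nonneg (b : Bool) : 0 ≤ bval b := by cases b <;> simp [bval]
lemma bval_le (b : Bool) : bval b ≤ 1 := by cases b <;> simp [bval]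

lemma ham_mem (n : ℕ) (σ t : Fin n → Bool) :
    0 ≤ (hammersleyShifted n σ t).1 ∧ (hammersleyShifted n σ t).1 ≤ 1 ∧
    0 ≤ (hammersleyShifted n σ t).2 ∧ (hammersleyShifted n σ t).2 ≤ 1 := by
  have h0 : (0:ℝ) ≤ 1 / 2 ^ n := by positivity
  unfold hammersleyShifted
  dsimp only
  refine ⟨Finset.sum_nonneg fun i _ => div_nonneg (bval_nonneg _) (by positivity), ?_,
    Finset.sum_nonneg fun i _ => div_nonneg (bval_nonneg _) (by positivity), ?_⟩
  · refine (Finset.sum_le_sum fun i _ => ?_).trans ((sum_p n).trans_le (by linarith))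
    have := bval_le (t i)
    gcongr
  · refine (Finset.sum_le_sum fun i _ => ?_).trans ((sum_q n).trans_le (by linarith))
    have := bval_le (t i != σ i)
    gcongr

lemma sum_main (n : ℕ) (σ : Fin n → Bool) :
    ∑ t, (1 - (hammersleyShifted n σ t).1) * (1 - (hammersleyShifted n σ t).2) =
      2 ^ n * (((1 + 1 / 2 ^ n) / 2) ^ 2 + (2 * (zeroCount σ : ℝ) - n) / 2 ^ (n + 3)) := by
  simp only [one_sub_fst, one_sub_snd]
  rw [sum_cov]
  have : ∀ i : Fin n, (1:ℝ) / 2 ^ (n - i.val) * (eps (σ i) / 2 ^ (i.val + 1)) =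
      1 / 2 ^ (n + 1) * eps (σ i) := by
    intro i
    have : (2:ℝ) ^ (n + 1) = 2 ^ (n - i.val) * 2 ^ (i.val + 1) := by
      rw [← pow_add]; congr 1; omega
    rw [this]; field_simp
  simp only [this, ← Finset.mul_sum, sum_eps]
  field_simp
  ring

lemma Icc_eq : Set.Icc (0 : ℝ × ℝ) 1 = Set.Icc (0:ℝ) 1 ×ˢ Set.Icc (0:ℝ) 1 := by
  rw [Set.Icc_prod_Icc]; rfl

noncomputable def stp (x s : ℝ) : ℝ := (Set.Ioi x).indicator 1 s

lemma stp_int (x : ℝ) : IntegrableOn (stp x) (Set.Icc 0 1) := by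
  refine IntegrableOn.indicator ?_ measurableSet_Ioi
  exact integrableOn_const (by simp)

lemma stp_integral (x : ℝ) (h0 : 0 ≤ x) (h1 : x ≤ 1) :
    ∫ s in Set.Icc (0:ℝ) 1, stp x s = 1 - x := by
  unfold stp
  rw [setIntegral_indicator measurableSet_Ioi]
  have : Set.Icc (0:ℝ) 1 ∩ Set.Ioi x = Set.Ioc x 1 := by
    ext s; simp; constructor
    · rintro ⟨⟨_, h⟩, h'⟩; exact ⟨h', h⟩
    · rintro ⟨h, h'⟩; exact ⟨⟨by linarith, h'⟩, h⟩
  rw [this]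
  simp [h1]

lemma prod_int (f g : ℝ → ℝ) (hf : IntegrableOn f (Set.Icc 0 1)) (hg : IntegrableOn g (Set.Icc 0 1)) :
    IntegrableOn (fun t : ℝ × ℝ => f t.1 * g t.2) (Set.Icc 0 1) := by
  rw [Icc_eq, IntegrableOn, Measure.volume_eq_prod, ← Measure.prod_restrict]
  exact Integrable.mul_prod hf hg

lemma prod_integral (f g : ℝ → ℝ) :
    ∫ t in Set.Icc (0 : ℝ × ℝ) 1, f t.1 * g t.2 =
     (∫ s in Set.Icc (0:ℝ) 1, f s) * ∫ s in Set.Icc (0:ℝ) 1, g s := by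
  rw [Icc_eq, Measure.volume_eq_prod, setIntegral_prod_mul]

lemma disc_eq (n : ℕ) (σ : Fin n → Bool) (t : ℝ × ℝ) : localDisc (hammersleyShifted n σ) t =
    (∑ k, stp (hammersleyShifted n σ k).1 t.1 * stp (hammersleyShifted n σ k).2 t.2) / 2 ^ n
      - t.1 * t.2 := by
  simp only [localDisc, countIn, Finset.card_filter]
  push_cast
  congr 2
  · refine Finset.sum_congr rfl fun k _ => ?_
    obtain ⟨h1, _, h2, _⟩ := ham_mem n σ k
    simp only [stp, Set.indicator, Set.mem_Ioi, h1, h2, true_and]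
    split_ifs <;> simp_all
  · simp

lemma integral_disc (n : ℕ) (σ : Fin n → Bool) :
    (∫ t in Set.Icc (0 : ℝ × ℝ) 1, localDisc (hammersleyShifted n σ) t) =
      (2 * (zeroCount σ : ℝ) + 4 - n) / 2 ^ (n + 3) + 1 / 2 ^ (2 * (n + 1)) := by
  have hid : IntegrableOn (fun s : ℝ => s) (Set.Icc 0 1) :=
    continuous_id.integrableOn_Icc
  have hidv : ∫ s in Set.Icc (0:ℝ) 1, s = 1 / 2 := by
    rw [integral_Icc_eq_integral_Ioc, ← intervalIntegral.integral_of_le zero_le_one]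
    simp
  simp only [disc_eq]
  rw [integral_sub, integral_div, integral_finsetSum, prod_integral (fun s => s) (fun s => s), hidv]
  · have : ∀ k, ∫ t in Set.Icc (0 : ℝ × ℝ) 1,
        stp (hammersleyShifted n σ k).1 t.1 * stp (hammersleyShifted n σ k).2 t.2
        = (1 - (hammersleyShifted n σ k).1) * (1 - (hammersleyShifted n σ k).2) := by
      intro k
      obtain ⟨h1, h2, h3, h4⟩ := ham_mem n σ k
      rw [prod_integral, stp_integral _ h1 h2, stp_integral _ h3 h4]
    simp only [this, sum_main]
    field_simp
    ring
  · intro k _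
    exact prod_int _ _ (stp_int _) (stp_int _)
  · refine Integrable.div_const ?_ _
    refine integrable_finsetSum _ fun k _ => ?_
    exact prod_int _ _ (stp_int _) (stp_int _)
  · exact prod_int _ _ hid hid

lemma haar_eq (n : ℕ) (σ : Fin n → Bool) :
    haarCoeff (hammersleyShifted n σ) (-1, -1) (0, 0) =
    (∫ t in Set.Icc (0 : ℝ × ℝ) 1, localDisc (hammersleyShifted n σ) t) := by
  have hae : (Set.Icc (0 : ℝ × ℝ) 1) =ᵐ[volume] (Set.Ico (0:ℝ) 1 ×ˢ Set.Ico (0:ℝ) 1) := by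
    rw [Icc_eq, Measure.volume_eq_prod]
    exact Measure.set_prod_ae_eq Ico_ae_eq_Icc.symm Ico_ae_eq_Icc.symm
  unfold haarCoeff
  rw [setIntegral_congr_set hae, setIntegral_congr_set hae]
  refine setIntegral_congr_fun (measurableSet_Ico.prod measurableSet_Ico) ?_
  rintro ⟨a, b⟩ ⟨⟨h1, h2⟩, h3, h4⟩
  simp only at h1 h2 h3 h4
  simp [haar2, haar1, h1, h2, h3, h4]

/-- The Haar coefficient for `j = (-1,-1)`, `m = (0,0)`, i.e. the integral of the
local discrepancy of `R_{n,σ}`, equals `2^{-(n+3)}(2aₙ + 4 - n) + 2^{-2(n+1)}`. -/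
theorem statement10 (n : ℕ) (hn : 0 < n) (σ : Fin n → Bool) :
    haarCoeff (hammersleyShifted n σ) (-1, -1) (0, 0) =
      (2 * (zeroCount σ : ℝ) + 4 - n) / 2 ^ (n + 3) + 1 / 2 ^ (2 * (n + 1)) ∧
    (∫ t in Set.Icc (0 : ℝ × ℝ) 1, localDisc (hammersleyShifted n σ) t) =
      (2 * (zeroCount σ : ℝ) + 4 - n) / 2 ^ (n + 3) + 1 / 2 ^ (2 * (n + 1)) := by
  exact ⟨(haar_eq n σ).trans (integral_disc n σ), integral_disc n σ⟩
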